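/- Let α ∈ (0,1), n ≥ 2, and let w ∈ W_{2n} be a configuration with E(w) > 0. Let A(w) be the set of positions i (1 ≤ i < 2n) such that w_i ≠ w_{i+1} and E(w^{(i)}) ≤ E(w), where w^{(i)} is the word obtained from w by exchanging w_i and w_{i+1}. Then A(w) is nonempty and the average variation of the variant over the allowed flips satisfies (1/|A(w)|)·Σ_{i ∈ A(w)} (φ_α(w^{(i)}) − φ_α(w)) ≤ −(α(1−α)/2)·n^{α−2}. -/

import Mathlib

open scoped BigOperators ENNReal

attribute [local instance] Classical.propDecidable

namespace Cooling

/-- Words over the alphabet `{1,2}`, modeled as lists of booleans: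
`true` encodes the letter `1`, `false` encodes the letter `2`. -/
abbrev Word := List Bool

/-- `w` is a configuration of length `2*n`: a word of length `2*n` with as many
occurrences of the letter `1` (`true`) as of the letter `2` (`false`). -/
def IsConfig (n : ℕ) (w : Word) : Prop :=
  w.length = 2 * n ∧ w.count true = n

/-- The (finite) set `W_{2n}` of all configurations of length `2*n`. -/
def configSet (n : ℕ) : Finset Word :=
  ((Finset.univ : Finset (Fin (2 * n) → Bool)).image List.ofFn).filter
    (fun w => w.count true = n)

/-- The number `E(w)` of mismatches of `w`: positions `i` with `w_i = w_{i+1}`. -/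
def mismatches (w : Word) : ℕ :=
  (w.zip w.tail).countP (fun p => p.1 == p.2)

/-- The number `F(w)` of flips performable on `w`: positions `i` with `w_i ≠ w_{i+1}`. -/
def flipCount (w : Word) : ℕ :=
  (w.zip w.tail).countP (fun p => p.1 != p.2)

/-- The word `w^{(i)}` obtained from `w` by exchanging the letters at positions
`i` and `i+1` (0-indexed). -/
def flip (w : Word) (i : ℕ) : Word :=
  (w.set i (w.getD (i + 1) true)).set (i + 1) (w.getD i true)

/-- A flip is permitted at position `i` if both positions `i` and `i+1` exist and the
corresponding letters are different. -/
def CanFlip (w : Word) (i : ℕ) : Prop :=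
  i + 1 < w.length ∧ w.getD i true ≠ w.getD (i + 1) true

/-- The set of positions at which a flip is allowed in the cooling process:
positions of permitted flips which do not increase the number of mismatches. -/
noncomputable def allowedFlips (w : Word) : Finset ℕ :=
  (Finset.range w.length).filter
    (fun i => CanFlip w i ∧ mismatches (flip w i) ≤ mismatches w)

/-- One step of the cooling process: if `E(w) = 0`, stay at `w`; otherwise, perform
a flip chosen uniformly at random among the flips which do not increase the number
of mismatches. -/
noncomputable def coolStep (w : Word) : PMF Word :=
  if h : mismatches w ≠ 0 ∧ (allowedFlips w).Nonempty then
    (PMF.uniformOfFinset (allowedFlips w) h.2).map (flip w)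
  else
    PMF.pure w

/-- The distribution of the cooling process at time `t`, started from `w`. -/
noncomputable def coolDist (w : Word) : ℕ → PMF Word
  | 0 => PMF.pure w
  | t + 1 => (coolDist w t).bind coolStep

/-- The expected convergence time `E[T | w₀ = w]` of the cooling process started at `w`,
where `T = min {t ≥ 0 : E(w_t) = 0}`.  Since mismatch-free configurations are absorbing,
`E[T] = ∑_{t ≥ 0} P(T > t) = ∑_{t ≥ 0} P(E(w_t) ≠ 0)`. -/
noncomputable def expConvTime (w : Word) : ℝ≥0∞ :=
  ∑' t : ℕ, (coolDist w t).toOuterMeasure {v | mismatches v ≠ 0}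

/-- The factor of `w` starting at position `s` (0-indexed) of length `l`. -/
def factor (w : Word) (s l : ℕ) : Word := (w.drop s).take l

/-- The height `|p|₁ - |p|₂` of the length-`s` prefix `p` of `w`. -/
def height (w : Word) (s : ℕ) : ℤ :=
  ((w.take s).count true : ℤ) - (w.take s).count false

/-- The occurrence `(s, l)` is a positive Dyck factor of `w`. -/
def IsPosDyckAt (w : Word) (s l : ℕ) : Prop :=
  0 < l ∧ s + l ≤ w.length ∧
  (factor w s l).count true = (factor w s l).count false ∧
  (∀ i ≤ l, ((factor w s l).take i).count false ≤ ((factor w s l).take i).count true) ∧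
  0 ≤ height w s

/-- The occurrence `(s, l)` is a negative Dyck factor of `w`. -/
def IsNegDyckAt (w : Word) (s l : ℕ) : Prop :=
  0 < l ∧ s + l ≤ w.length ∧
  (factor w s l).count true = (factor w s l).count false ∧
  (∀ i ≤ l, ((factor w s l).take i).count true ≤ ((factor w s l).take i).count false) ∧
  height w s ≤ 0

/-- The occurrence `(s, l)` is a Dyck factor of `w` (positive or negative). -/
def IsDyckAt (w : Word) (s l : ℕ) : Prop :=
  IsPosDyckAt w s l ∨ IsNegDyckAt w s l

/-- The occurrence `(s, l)` is a maximal Dyck factor of `w`: no Dyck factor of `w`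
with the same height contains it (other than itself). -/
def IsMaxDyckAt (w : Word) (s l : ℕ) : Prop :=
  IsDyckAt w s l ∧
  ∀ s' l', IsDyckAt w s' l' → height w s' = height w s → s' ≤ s → s + l ≤ s' + l' →
    s' = s ∧ l' = l

/-- The set `DF(w)` of (occurrences of) maximal Dyck factors of `w`,
encoded as pairs (starting position, length). -/
noncomputable def DF (w : Word) : Finset (ℕ × ℕ) :=
  ((Finset.range (w.length + 1)) ×ˢ (Finset.range (w.length + 1))).filter
    (fun sl => IsMaxDyckAt w sl.1 sl.2)

/-- The variant `φ_α(w) = ∑_{v ∈ DF(w)} (1 + |v|₁)^α`. -/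
noncomputable def phi (α : ℝ) (w : Word) : ℝ :=
  ∑ sl ∈ DF w, (1 + ((factor w sl.1 sl.2).count true : ℝ)) ^ α

/-- The volume `V(w) = (1/2) ∑_{k=1}^{|w|} |h_{k-1}(w) + h_k(w)|`: the area between
the broken-line representation of `w` and the horizontal axis. -/
noncomputable def volume (w : Word) : ℝ :=
  (1 / 2) * ∑ k ∈ Finset.range w.length, |((height w k + height w (k + 1) : ℤ) : ℝ)|

/-!
A word is read as its height path. Exchanging two different neighbouring letters turns a valley of
the path into a peak or vice versa, and thereby merges two maximal Dyck factors (*excursions*) into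
one or splits one into two, where an excursion may be empty. By concavity of `m ↦ (1 + m) ^ α`, only
extending a single excursion by one step can increase the variant.

The variation caused by a flip is charged to the two sides of the flipped site. An extension to the
left at a valley `p` is compensated by the peak `q` at the top of the ascent which starts at `p`:
flipping `q` shortens an excursion, the ascent determines `p` from `q`, and the excursion that
starts at `q + 1` is strictly shorter than the one that starts at `p + 1`, so that concavity turns
the comparison of the two charges into a gain for both flips. Extensions to the right are dual by
reversal of the path, and paths of negative height by exchange of the two letters.
-/

theorem nonpos_of_hasDerivAt_nonpos {g g' : ℝ → ℝ} {a b : ℝ}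
    (hg : ∀ s ∈ Set.Icc a b, HasDerivAt g (g' s) s) (hg' : ∀ s ∈ Set.Icc a b, g' s ≤ 0)
    (ha : g a = 0) : ∀ s ∈ Set.Icc a b, g s ≤ 0 := by
  intro s hs
  have hanti : AntitoneOn g (Set.Icc a b) :=
    antitoneOn_of_hasDerivWithinAt_nonpos (convex_Icc a b)
      (fun t ht => (hg t ht).continuousAt.continuousWithinAt)
      (fun t ht => (hg t (interior_subset ht)).hasDerivWithinAt)
      (fun t ht => hg' t (interior_subset ht))
  exact ha ▸ hanti ⟨le_rfl, hs.1.trans hs.2⟩ hs hs.1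

theorem second_difference_le {f f' f'' : ℝ → ℝ} {x h c : ℝ} (hh : 0 ≤ h)
    (hf : ∀ y ∈ Set.Icc (x - h) (x + h), HasDerivAt f (f' y) y)
    (hf' : ∀ y ∈ Set.Icc (x - h) (x + h), HasDerivAt f' (f'' y) y)
    (hc : ∀ s ∈ Set.Icc 0 h, f'' (x + s) + f'' (x - s) ≤ 2 * c) :
    f (x + h) + f (x - h) - 2 * f x ≤ c * h ^ 2 := by
  have hadd : ∀ s ∈ Set.Icc 0 h, x + s ∈ Set.Icc (x - h) (x + h) := fun s hs =>
    ⟨by linarith [hs.1], by linarith [hs.2]⟩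
  have hsub : ∀ s ∈ Set.Icc 0 h, x - s ∈ Set.Icc (x - h) (x + h) := fun s hs =>
    ⟨by linarith [hs.2], by linarith [hs.1]⟩
  have hfirst : ∀ s ∈ Set.Icc 0 h, f' (x + s) - f' (x - s) - 2 * c * s ≤ 0 :=
    nonpos_of_hasDerivAt_nonpos
      (fun s hs => (((hf' _ (hadd s hs)).comp_const_add x s).sub
        ((hf' _ (hsub s hs)).comp_const_sub x s)).sub ((hasDerivAt_id s).const_mul (2 * c)))
      (fun s hs => by linarith [hc s hs]) (by simp)
  have hsecond : ∀ s ∈ Set.Icc 0 h, f (x + s) + f (x - s) - 2 * f x - c * s ^ 2 ≤ 0 :=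
    nonpos_of_hasDerivAt_nonpos
      (fun s hs => ((((hf _ (hadd s hs)).comp_const_add x s).add
        ((hf _ (hsub s hs)).comp_const_sub x s)).sub_const (2 * f x)).sub
        (((hasDerivAt_id s).pow 2).const_mul c))
      (fun s hs => by simpa [mul_left_comm, mul_assoc] using hfirst s hs) (by simp; ring)
  linarith [hsecond h ⟨hh, le_rfl⟩]

theorem two_mul_rpow_le_rpow_add_add_rpow_sub {c x s : ℝ} (hc : c ≤ 0) (hs : |s| < x) :
    2 * x ^ c ≤ (x + s) ^ c + (x - s) ^ c := by
  obtain ⟨hs₁, hs₂⟩ := abs_lt.1 hs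
  have hadd : 0 < x + s := by linarith
  have hsub : 0 < x - s := by linarith
  have hx : 0 < x := (abs_nonneg s).trans_lt hs
  have hprod : (x ^ c) ^ 2 ≤ (x + s) ^ c * (x - s) ^ c := by
    rw [← Real.mul_rpow hadd.le hsub.le, sq, ← Real.mul_rpow hx.le hx.le]
    exact Real.rpow_le_rpow_of_nonpos (mul_pos hadd hsub) (by nlinarith [sq_nonneg s]) hc
  refine abs_le_of_sq_le_sq' ?_ (by positivity) |>.2
  nlinarith [sq_nonneg ((x + s) ^ c - (x - s) ^ c)]

theorem rpow_second_difference_le {α x : ℝ} (h0 : 0 ≤ α) (h1 : α ≤ 1) (hx : 1 < x) :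
    (x + 1) ^ α + (x - 1) ^ α - 2 * x ^ α ≤ -(α * (1 - α)) * x ^ (α - 2) := by
  have hpos : ∀ y ∈ Set.Icc (x - 1) (x + 1), y ≠ 0 := fun y hy => by linarith [hy.1]
  have key := second_difference_le (f := (· ^ α)) (f' := fun y => α * y ^ (α - 1))
    (f'' := fun y => α * ((α - 1) * y ^ (α - 1 - 1))) (x := x) (h := 1)
    (c := α * (α - 1) * x ^ (α - 1 - 1)) zero_le_one
    (fun y hy => Real.hasDerivAt_rpow_const (Or.inl (hpos y hy)))
    (fun y hy => (Real.hasDerivAt_rpow_const (Or.inl (hpos y hy))).const_mul α)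
    (fun s hs => by
      have hconv := two_mul_rpow_le_rpow_add_add_rpow_sub (c := α - 1 - 1) (by linarith)
        (abs_lt.2 ⟨by linarith [hs.1], hs.2.trans_lt hx⟩)
      nlinarith [mul_nonneg h0 (sub_nonneg.2 h1)])
  rw [show α - 1 - 1 = α - 2 by ring] at key
  linarith

/-- The contribution `(1 + m)^α` to the variant of a maximal Dyck factor of half-length `m`;
`m = 0` encodes an empty factor, which contributes nothing. -/
noncomputable def dyckWeight (α : ℝ) (m : ℕ) : ℝ := if m = 0 then 0 else (1 + (m : ℝ)) ^ α

/-- The average decrease of the variant guaranteed for each allowed flip. -/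
noncomputable def drift (α : ℝ) (n : ℕ) : ℝ := α * (1 - α) / 2 * (n : ℝ) ^ (α - 2)

/-- The part of the variation of the variant that is charged to one side of a flip, `b` being the
half-length of the excursion on that side. Flipping a peak of an excursion of half-length `b + 1`
changes the variant by `f b - f (b + 1)` if `0 < b`; if `b = 0`, both sides of the peak are empty
and each of them takes one half of `f 1`. -/
noncomputable def sideLoss (f : ℕ → ℝ) (b : ℕ) : ℝ := if b = 0 then f 1 / 2 else f (b + 1) - f b

/-- The strict concavity, with gap `δ` and up to half-length `n`, of the weight `f` of an excursion
as a function of its half-length. This is all that the descent argument needs to know about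
`dyckWeight α`. -/
structure IsDriftWeight (n : ℕ) (f : ℕ → ℝ) (δ : ℝ) : Prop where
  zero : f 0 = 0
  gap_nonneg : 0 ≤ δ
  sideLoss_succ_add_le : ∀ b, b + 1 < n → sideLoss f (b + 1) + 2 * δ ≤ sideLoss f b
  gap_le_sideLoss : ∀ b, b < n → δ ≤ sideLoss f b

namespace IsDriftWeight

variable {n : ℕ} {f : ℕ → ℝ} {δ : ℝ}

theorem sideLoss_add_le (hf : IsDriftWeight n f δ) {a b : ℕ} (hab : a < b) (hb : b < n) :
    sideLoss f b + 2 * δ ≤ sideLoss f a := by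
  induction b, hab using Nat.le_induction with
  | base => exact hf.sideLoss_succ_add_le a hb
  | succ b _ ih =>
    linarith [ih (by omega), hf.sideLoss_succ_add_le b hb, hf.gap_nonneg]

theorem merge_add_le (hf : IsDriftWeight n f δ) {a b : ℕ} (ha : 0 < a) (hb : 0 < b)
    (hab : a + b + 1 ≤ n) : f (a + b + 1) + δ ≤ f a + f b := by
  have sideLoss_eq : ∀ m, 0 < m → sideLoss f m = f (m + 1) - f m := fun m hm => if_neg hm.ne'
  have sideLoss_zero : sideLoss f 0 = f 1 / 2 := if_pos rfl
  induction a, ha using Nat.le_induction with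
  | base =>
    have hfst := hf.sideLoss_add_le hb (by omega)
    have hsnd := hf.sideLoss_add_le (Nat.succ_pos b) (by omega)
    rw [show 0 + 1 + b + 1 = b + 1 + 1 by ring]
    linarith [sideLoss_eq b hb, sideLoss_eq (b + 1) b.succ_pos, hf.gap_nonneg]
  | succ a ha ih =>
    have hloss := hf.sideLoss_add_le (show a < a + b + 1 by omega) (by omega)
    rw [show a + 1 + b + 1 = a + b + 1 + 1 by ring]
    linarith [ih (by omega), sideLoss_eq a ha, sideLoss_eq (a + b + 1) (by omega), hf.gap_nonneg]

end IsDriftWeight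

section DyckWeight

variable {α : ℝ} {n b : ℕ}

theorem drift_nonneg (h0 : 0 ≤ α) (h1 : α ≤ 1) : 0 ≤ drift α n := by
  have := sub_nonneg.2 h1
  unfold drift
  positivity

theorem sideLoss_dyckWeight_zero : sideLoss (dyckWeight α) 0 = 2 ^ α / 2 := by
  norm_num [sideLoss, dyckWeight]

theorem sideLoss_dyckWeight_succ :
    sideLoss (dyckWeight α) (b + 1) = ((b : ℝ) + 3) ^ α - ((b : ℝ) + 2) ^ α := by
  simp only [sideLoss, dyckWeight, Nat.succ_ne_zero, if_false]
  push_cast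
  ring_nf

theorem two_mul_drift_le (h0 : 0 ≤ α) (h1 : α ≤ 1) {x : ℝ} (hx : 0 < x) (hxn : x ≤ n) :
    2 * drift α n ≤ α * (1 - α) * x ^ (α - 2) := by
  have hpow := Real.rpow_le_rpow_of_nonpos hx hxn (show α - 2 ≤ 0 by linarith)
  have := mul_le_mul_of_nonneg_left hpow (mul_nonneg h0 (sub_nonneg.2 h1))
  unfold drift
  linarith

theorem sideLoss_dyckWeight_one_add_le (h0 : 0 ≤ α) (h1 : α ≤ 1) (hn : 2 ≤ n) :
    sideLoss (dyckWeight α) 1 + 2 * drift α n ≤ sideLoss (dyckWeight α) 0 := by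
  have hthree : (3 : ℝ) ^ α ≤ 2 ^ α * (1 + α / 2) := by
    rw [show (3 : ℝ) = 2 * (1 + 1 / 2) by norm_num, Real.mul_rpow zero_le_two (by norm_num)]
    gcongr
    linarith [rpow_one_add_le_one_add_mul_self (s := 1 / 2) (by norm_num) h0 h1]
  have hdrift := two_mul_drift_le h0 h1 two_pos (show (2 : ℝ) ≤ n by exact_mod_cast hn)
  have htwo : (2 : ℝ) ^ (α - 2) = 2 ^ α / 4 := by
    rw [Real.rpow_sub two_pos]; norm_num
  rw [htwo] at hdrift
  rw [sideLoss_dyckWeight_zero, sideLoss_dyckWeight_succ]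
  norm_num
  have hpos : 0 < (2 : ℝ) ^ α := by positivity
  nlinarith [mul_nonneg hpos.le (sub_nonneg.2 h1), mul_nonneg hpos.le (mul_self_nonneg (1 - α))]

theorem sideLoss_dyckWeight_succ_succ_add_le (h0 : 0 ≤ α) (h1 : α ≤ 1) (hb : b + 2 < n) :
    sideLoss (dyckWeight α) (b + 2) + 2 * drift α n ≤ sideLoss (dyckWeight α) (b + 1) := by
  have : (0 : ℝ) ≤ b := b.cast_nonneg
  have hdiff := rpow_second_difference_le h0 h1 (show 1 < (b : ℝ) + 3 by linarith)
  have hdrift := two_mul_drift_le h0 h1 (show 0 < (b : ℝ) + 3 by linarith)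
    (show (b : ℝ) + 3 ≤ n by exact_mod_cast hb)
  rw [sideLoss_dyckWeight_succ, sideLoss_dyckWeight_succ]
  push_cast
  ring_nf at hdiff ⊢
  ring_nf at hdrift
  linarith

theorem mul_rpow_sub_one_le_rpow_sub_rpow {x : ℝ} (h0 : 0 ≤ α) (h1 : α ≤ 1) (hx : 1 ≤ x) :
    α * x ^ (α - 1) ≤ x ^ α - (x - 1) ^ α := by
  have hpos : 0 < x := one_pos.trans_le hx
  have hbernoulli := rpow_one_add_le_one_add_mul_self (s := -x⁻¹)
    (neg_le_neg (inv_le_one_of_one_le₀ hx)) h0 h1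
  have hsub : (x - 1) ^ α = x ^ α * (1 + -x⁻¹) ^ α := by
    rw [← Real.mul_rpow hpos.le (by linarith [inv_le_one_of_one_le₀ hx])]
    congr 1
    field_simp
    ring
  have := mul_le_mul_of_nonneg_left hbernoulli (Real.rpow_nonneg hpos.le α)
  rw [Real.rpow_sub_one hpos.ne', hsub, div_eq_mul_inv]
  linarith

theorem drift_le_sideLoss_dyckWeight (h0 : 0 ≤ α) (h1 : α ≤ 1) (hb : b < n) :
    drift α n ≤ sideLoss (dyckWeight α) b := by
  have hn : (1 : ℝ) ≤ n := by exact_mod_cast Nat.one_le_of_lt hb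
  have hn₀ : (0 : ℝ) < n := one_pos.trans_le hn
  rcases b with _ | b
  · have hpow : (n : ℝ) ^ (α - 2) ≤ 1 := Real.rpow_le_one_of_one_le_of_nonpos hn (by linarith)
    have htwo : (1 : ℝ) ≤ 2 ^ α := Real.one_le_rpow one_le_two h0
    rw [sideLoss_dyckWeight_zero, drift]
    nlinarith [mul_nonneg h0 (sub_nonneg.2 h1)]
  · have hbn : (b : ℝ) + 3 ≤ 2 * n := by
      have : (b : ℝ) + 2 ≤ n := by exact_mod_cast hb
      linarith
    have htwo : (2 : ℝ) ^ (-1 : ℝ) ≤ 2 ^ (α - 1) :=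
      Real.rpow_le_rpow_of_exponent_le one_le_two (by linarith)
    calc drift α n = α * (1 - α) * (2 ^ (-1 : ℝ) * (n : ℝ) ^ (α - 2)) := by
          rw [drift, Real.rpow_neg_one]; ring
      _ ≤ α * 1 * (2 ^ (α - 1) * (n : ℝ) ^ (α - 1)) := by
          gcongr <;> linarith
      _ = α * (2 * n : ℝ) ^ (α - 1) := by rw [Real.mul_rpow two_pos.le hn₀.le, mul_one]
      _ ≤ α * ((b : ℝ) + 3) ^ (α - 1) := by
          gcongr ?_ * ?_
          exact Real.rpow_le_rpow_of_nonpos (by positivity) hbn (by linarith)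
      _ ≤ ((b : ℝ) + 3) ^ α - ((b : ℝ) + 3 - 1) ^ α :=
          mul_rpow_sub_one_le_rpow_sub_rpow h0 h1 (by linarith [b.cast_nonneg (α := ℝ)])
      _ = sideLoss (dyckWeight α) (b + 1) := by rw [sideLoss_dyckWeight_succ]; ring_nf

theorem isDriftWeight_dyckWeight (h0 : 0 ≤ α) (h1 : α ≤ 1) :
    IsDriftWeight n (dyckWeight α) (drift α n) where
  zero := if_pos rfl
  gap_nonneg := drift_nonneg h0 h1
  sideLoss_succ_add_le
    | 0, hb => sideLoss_dyckWeight_one_add_le h0 h1 hb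
    | _ + 1, hb => sideLoss_dyckWeight_succ_succ_add_le h0 h1 hb
  gap_le_sideLoss _ hb := drift_le_sideLoss_dyckWeight h0 h1 hb

end DyckWeight

/-- The height function of a balanced word of length `N`, extended to `ℤ` by letters `1` before
the word and letters `2` after it, so that no special treatment of the ends is needed. -/
structure IsPath (N : ℤ) (H : ℤ → ℤ) : Prop where
  step : ∀ t, H (t + 1) = H t + 1 ∨ H (t + 1) = H t - 1
  left : ∀ t ≤ 0, H t = t
  right : ∀ t, N ≤ t → H t = N - t

/-- The path read from right to left. -/
def reversePath (N : ℤ) (H : ℤ → ℤ) (t : ℤ) : ℤ := H (N - t)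

/-- The largest `e ≥ q` such that `H` stays above the height `H q` on `[q, e]`, in a form which
requires in addition that `H e = H q`. -/
structure IsRightEnd (H : ℤ → ℤ) (q e : ℤ) : Prop where
  le : q ≤ e
  eq : H e = H q
  le_height : ∀ u, q ≤ u → u ≤ e → H q ≤ H u
  end_lt : H (e + 1) < H q

/-- The path `H` restricted to `[s, e]` is a maximal Dyck path. -/
structure IsExcursion (H : ℤ → ℤ) (s e : ℤ) : Prop extends IsRightEnd H s e where
  start_lt : H (s - 1) < H s

/-- Half the length of the longest Dyck path of `H` that starts at `q`. The steps of `H` being `±1`,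
its first point below `H q` is at an odd distance from `q`; if there is no such point, the value is
`0`. -/
noncomputable def rightHalf (H : ℤ → ℤ) (q : ℤ) : ℕ := sInf {m : ℕ | H (q + 2 * m + 1) < H q}

/-- Half the length of the longest Dyck path of `H` that ends at `q`. -/
noncomputable def leftHalf (N : ℤ) (H : ℤ → ℤ) (q : ℤ) : ℕ := rightHalf (reversePath N H) (N - q)

/-- The weight of the maximal Dyck path of nonnegative height which starts at `s`, if there is
one. -/
noncomputable def startWeight (f : ℕ → ℝ) (H : ℤ → ℤ) (s : ℤ) : ℝ :=
  if H (s - 1) < H s ∧ 0 ≤ H s then f (rightHalf H s) else 0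

/-- The contribution to the variant of the maximal Dyck paths of nonnegative height, for an
arbitrary weight `f` of their half-lengths. -/
noncomputable def posVariant (f : ℕ → ℝ) (N : ℤ) (H : ℤ → ℤ) : ℝ :=
  ∑ s ∈ Finset.Icc 0 N, startWeight f H s

/-- The path `H` has a local minimum at `p`. -/
def IsValley (H : ℤ → ℤ) (p : ℤ) : Prop := H (p - 1) = H p + 1 ∧ H (p + 1) = H p + 1

/-- The path `H` has a local maximum at `p`. -/
def IsPeak (H : ℤ → ℤ) (p : ℤ) : Prop := H (p - 1) = H p - 1 ∧ H (p + 1) = H p - 1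

/-- The path with the steps before and after `p` exchanged. -/
def flipPath (H : ℤ → ℤ) (p : ℤ) : ℤ → ℤ := Function.update H p (H (p - 1) + H (p + 1) - H p)

section Paths

variable {N : ℤ} {H H' : ℤ → ℤ} {f : ℕ → ℝ} {p q s e : ℤ}

@[simp]
theorem reversePath_reversePath : reversePath N (reversePath N H) = H := by
  funext t
  simp [reversePath]

@[simp]
theorem reversePath_sub (t : ℤ) : reversePath N H (N - t) = H t := by simp [reversePath]

theorem IsPath.reverse (hH : IsPath N H) : IsPath N (reversePath N H) where
  step t := by
    have := hH.step (N - (t + 1))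
    rw [show N - (t + 1) + 1 = N - t by ring] at this
    simp only [reversePath]
    omega
  left t ht := by rw [reversePath, hH.right _ (by omega), sub_sub_cancel]
  right t ht := by rw [reversePath, hH.left _ (by omega)]

theorem IsPath.step_pred (hH : IsPath N H) (t : ℤ) : H (t - 1) = H t + 1 ∨ H (t - 1) = H t - 1 := by
  have := hH.step (t - 1)
  rw [sub_add_cancel] at this
  omega

theorem IsPath.mem_Icc_of_nonneg (hH : IsPath N H) {t : ℤ} (ht : 0 ≤ H t) :
    t ∈ Finset.Icc 0 N := by
  rw [Finset.mem_Icc]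
  constructor <;> by_contra! h
  · linarith [hH.left t h.le]
  · linarith [hH.right t h.le]

theorem IsPath.even_sub_sub (hH : IsPath N H) (hqe : q ≤ e) : Even (H e - H q - (e - q)) := by
  induction e, hqe using Int.leInduction with
  | base => simp
  | succ e _ ih =>
    have := hH.step e
    rw [Int.even_iff] at ih ⊢
    omega

theorem IsRightEnd.rightHalf_eq {m : ℕ} (h : IsRightEnd H q (q + 2 * m)) : rightHalf H q = m := by
  refine le_antisymm (Nat.sInf_le h.end_lt) (le_csInf ⟨m, h.end_lt⟩ fun k hk => ?_)
  by_contra! hkm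
  exact (h.le_height (q + 2 * k + 1) (by omega) (by omega)).not_gt hk

theorem IsPath.exists_isRightEnd (hH : IsPath N H) (hq : 0 ≤ H q) : ∃ e, IsRightEnd H q e := by
  obtain ⟨e, ⟨hqe, hlt⟩, hleast⟩ := Int.exists_least_of_bdd
    (P := fun e => q ≤ e ∧ H (e + 1) < H q) ⟨q, fun _ h => h.1⟩
    ⟨N, (Finset.mem_Icc.1 (hH.mem_Icc_of_nonneg hq)).2, by rw [hH.right _ (by omega)]; omega⟩
  have hge : ∀ u, q ≤ u → u ≤ e → H q ≤ H u := by
    intro u hqu hue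
    rcases hqu.eq_or_lt with rfl | hqu
    · rfl
    · by_contra! hu
      have := hleast (u - 1) ⟨by omega, by rwa [sub_add_cancel]⟩
      omega
  refine ⟨e, hqe, ?_, hge, hlt⟩
  have := hge e hqe le_rfl
  rcases hH.step e with h | h <;> omega

theorem IsRightEnd.eq_add_rightHalf (hH : IsPath N H) (h : IsRightEnd H q e) :
    e = q + 2 * rightHalf H q := by
  obtain ⟨k, hk⟩ := hH.even_sub_sub h.le
  have heq := h.eq
  have hle := h.le
  lift -k to ℕ using by omega with m hm
  obtain rfl : e = q + 2 * m := by omega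
  rw [h.rightHalf_eq]

theorem IsPath.isRightEnd_rightHalf (hH : IsPath N H) (hq : 0 ≤ H q) :
    IsRightEnd H q (q + 2 * rightHalf H q) := by
  obtain ⟨e, he⟩ := hH.exists_isRightEnd hq
  exact he.eq_add_rightHalf hH ▸ he

theorem rightHalf_eq_zero_of_lt (h : H (q + 1) < H q) : rightHalf H q = 0 :=
  Nat.sInf_eq_zero.2 (Or.inl (by simpa using h))

theorem rightHalf_congr (h : ∀ t, q ≤ t → H t = H' t) : rightHalf H q = rightHalf H' q := by
  unfold rightHalf
  congr 1
  ext m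
  rw [Set.mem_ofPred_eq, Set.mem_ofPred_eq, h _ (by omega), h _ le_rfl]

theorem leftHalf_congr (h : ∀ t, t ≤ q → H t = H' t) : leftHalf N H q = leftHalf N H' q :=
  rightHalf_congr fun _ ht => h _ (by omega)

theorem IsExcursion.reverse (h : IsExcursion H s e) :
    IsExcursion (reversePath N H) (N - e) (N - s) where
  le := by linarith [h.le]
  eq := by simp [h.eq]
  le_height u hu₁ hu₂ := by
    simpa [reversePath, h.eq] using h.le_height (N - u) (by omega) (by omega)
  end_lt := by simpa [h.eq, sub_add] using h.start_lt
  start_lt := by simpa [h.eq, sub_sub] using h.end_lt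

theorem IsExcursion.start_unique {s' : ℤ} (h : IsExcursion H s e) (h' : IsExcursion H s' e) :
    s = s' := by
  have heq : H s = H s' := h.eq.symm.trans h'.eq
  have hlt := h.start_lt
  have hlt' := h'.start_lt
  rcases lt_trichotomy s s' with hss | hss | hss
  · linarith [h.le_height (s' - 1) (by omega) (by linarith [h'.le])]
  · exact hss
  · linarith [h'.le_height (s - 1) (by omega) (by linarith [h.le])]

theorem IsPath.isExcursion_rightHalf (hH : IsPath N H) (hs : 0 ≤ H s) (hlt : H (s - 1) < H s) :
    IsExcursion H s (s + 2 * rightHalf H s) :=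
  ⟨hH.isRightEnd_rightHalf hs, hlt⟩

theorem IsPath.isExcursion_leftHalf (hH : IsPath N H) (he : 0 ≤ H e) (hlt : H (e + 1) < H e) :
    IsExcursion H (e - 2 * leftHalf N H e) e := by
  have h := (hH.reverse.isExcursion_rightHalf (s := N - e) (by simpa using he)
    (by simpa [sub_sub] using hlt)).reverse (N := N)
  rw [reversePath_reversePath, sub_sub_cancel, ← sub_sub, sub_sub_cancel] at h
  exact h

theorem IsExcursion.startWeight_eq {m : ℕ} (h : IsExcursion H s (s + 2 * m)) (hs : 0 ≤ H s) :
    startWeight f H s = f m := by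
  rw [startWeight, if_pos ⟨h.start_lt, hs⟩, h.rightHalf_eq]

theorem startWeight_eq_zero_of_lt (h0 : f 0 = 0) (h : H (s + 1) < H s) : startWeight f H s = 0 := by
  rw [startWeight, rightHalf_eq_zero_of_lt h, h0, ite_self]

end Paths

section Flips

variable {N : ℤ} {H : ℤ → ℤ} {f : ℕ → ℝ} {p s e : ℤ}

@[simp]
theorem flipPath_self : flipPath H p p = H (p - 1) + H (p + 1) - H p := Function.update_self ..

theorem flipPath_of_ne {t : ℤ} (h : t ≠ p) : flipPath H p t = H t := Function.update_of_ne h ..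

theorem flipPath_flipPath : flipPath (flipPath H p) p = H := by
  funext t
  rcases eq_or_ne t p with rfl | h
  · simp [flipPath_of_ne (show t - 1 ≠ t by omega), flipPath_of_ne (show t + 1 ≠ t by omega)]
  · rw [flipPath_of_ne h, flipPath_of_ne h]

theorem IsPath.flipPath (hH : IsPath N H) (h0 : 0 < p) (hN : p < N) :
    IsPath N (flipPath H p) where
  step t := by
    have h := hH.step t
    rcases eq_or_ne t p with rfl | htp
    · have := hH.step_pred t
      rw [flipPath_self, flipPath_of_ne (by omega)]
      omega
    rcases eq_or_ne (t + 1) p with rfl | htp'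
    · have := hH.step (t + 1)
      rw [flipPath_self, flipPath_of_ne htp, add_sub_cancel_right]
      omega
    · rwa [flipPath_of_ne htp, flipPath_of_ne htp']
  left t ht := by rw [flipPath_of_ne (by omega), hH.left t ht]
  right t ht := by rw [flipPath_of_ne (by omega), hH.right t ht]

theorem IsValley.flipPath_self (hp : IsValley H p) : flipPath H p p = H p + 2 := by
  rw [Cooling.flipPath_self, hp.1, hp.2]
  ring

theorem IsPeak.isValley_flipPath (hp : IsPeak H p) : IsValley (flipPath H p) p := by
  obtain ⟨hl, hr⟩ := hp
  rw [IsValley, flipPath_self, flipPath_of_ne (by omega), flipPath_of_ne (by omega)]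
  omega

theorem IsRightEnd.flipPath (h : IsRightEnd H s e) (hs : s ≠ p) (he : e ≠ p) (he' : e + 1 ≠ p)
    (hp : H p ≤ flipPath H p p) : IsRightEnd (flipPath H p) s e where
  le := h.le
  eq := by rw [flipPath_of_ne hs, flipPath_of_ne he, h.eq]
  le_height u hsu hue := by
    rw [flipPath_of_ne hs]
    rcases eq_or_ne u p with rfl | hup
    · exact (h.le_height u hsu hue).trans hp
    · rw [flipPath_of_ne hup]
      exact h.le_height u hsu hue
  end_lt := by
    rw [flipPath_of_ne hs, flipPath_of_ne he']
    exact h.end_lt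

theorem IsValley.startWeight_flipPath (hp : IsValley H p) (hH : IsPath N H) (h0 : f 0 = 0)
    (hsp : s ≠ p + 1) (hs : 0 ≤ H s → ¬IsExcursion H s (p - 1)) :
    startWeight f (flipPath H p) s = startWeight f H s := by
  have hl := hp.1
  have hr := hp.2
  rcases eq_or_ne s p with rfl | hs'
  · rw [startWeight_eq_zero_of_lt h0, startWeight, if_neg (by omega)]
    rw [hp.flipPath_self, flipPath_of_ne (by omega)]
    omega
  by_cases hstart : H (s - 1) < H s ∧ 0 ≤ H s
  · have hexc := hH.isExcursion_rightHalf hstart.2 hstart.1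
    have hend : s + 2 * rightHalf H s ≠ p := by
      rintro h
      have := h ▸ hexc.end_lt
      have := h ▸ hexc.eq
      omega
    have hend' : s + 2 * rightHalf H s + 1 ≠ p := fun h =>
      hs hstart.2 (by rwa [← h, add_sub_cancel_right])
    have hexc' : IsExcursion (flipPath H p) s (s + 2 * rightHalf H s) :=
      ⟨hexc.toIsRightEnd.flipPath hs' hend hend' (by rw [hp.flipPath_self]; omega),
        by rw [flipPath_of_ne hs', flipPath_of_ne (by omega)]; exact hexc.start_lt⟩
    have hs_nonneg : 0 ≤ flipPath H p s := by rw [flipPath_of_ne hs']; exact hstart.2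
    rw [hexc.startWeight_eq hstart.2, hexc'.startWeight_eq hs_nonneg]
  · rw [startWeight, startWeight, flipPath_of_ne hs', flipPath_of_ne (by omega), if_neg hstart,
      if_neg hstart]

theorem IsValley.isExcursion_flipPath (hp : IsValley H p) (hl : IsExcursion H s (p - 1))
    (hr : IsExcursion H (p + 1) e) : IsExcursion (flipPath H p) s e := by
  have hpl := hp.1
  have hpr := hp.2
  have hsp := hl.le
  have hpe := hr.le
  have hs : H s = H (p + 1) := by rw [← hl.eq, hpl, hpr]
  refine ⟨⟨by omega, ?_, fun u hsu hue => ?_, ?_⟩, ?_⟩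
  · rw [flipPath_of_ne (by omega), flipPath_of_ne (by omega), hr.eq, hs]
  · rw [flipPath_of_ne (show s ≠ p by omega)]
    rcases lt_trichotomy u p with hup | rfl | hup
    · rw [flipPath_of_ne hup.ne]
      exact hl.le_height u hsu (by omega)
    · rw [hp.flipPath_self]
      omega
    · rw [flipPath_of_ne hup.ne', hs]
      exact hr.le_height u (by omega) hue
  · rw [flipPath_of_ne (by omega), flipPath_of_ne (by omega), hs]
    exact hr.end_lt
  · rw [flipPath_of_ne (by omega), flipPath_of_ne (by omega)]
    exact hl.start_lt

theorem IsValley.isExcursion_left (hp : IsValley H p) (hH : IsPath N H) (hh : 0 ≤ H (p + 1)) :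
    IsExcursion H (p - 1 - 2 * leftHalf N H (p - 1)) (p - 1) :=
  hH.isExcursion_leftHalf (by rw [hp.1, ← hp.2]; exact hh)
    (by rw [sub_add_cancel, hp.1]; exact lt_add_one _)

theorem IsValley.isExcursion_right (hp : IsValley H p) (hH : IsPath N H) (hh : 0 ≤ H (p + 1)) :
    IsExcursion H (p + 1) (p + 1 + 2 * rightHalf H (p + 1)) :=
  hH.isExcursion_rightHalf hh (by rw [add_sub_cancel_right, hp.2]; exact lt_add_one _)

theorem IsValley.posVariant_flipPath (hp : IsValley H p) (hH : IsPath N H) (h0 : f 0 = 0)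
    (hh : 0 ≤ H (p + 1)) :
    posVariant f N (flipPath H p) - posVariant f N H =
      f (leftHalf N H (p - 1) + rightHalf H (p + 1) + 1) - f (leftHalf N H (p - 1)) -
        f (rightHalf H (p + 1)) := by
  have hl := hp.isExcursion_left hH hh
  have hr := hp.isExcursion_right hH hh
  set a := leftHalf N H (p - 1)
  set b := rightHalf H (p + 1)
  set s := p - 1 - 2 * (a : ℤ)
  have hs_nonneg : 0 ≤ H s := by rw [← hl.eq, hp.1, ← hp.2]; exact hh
  have hmerge : IsExcursion (flipPath H p) s (s + 2 * (a + b + 1 : ℕ)) := by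
    have := hp.isExcursion_flipPath hl hr
    rwa [show p + 1 + 2 * (b : ℤ) = s + 2 * (a + b + 1 : ℕ) by push_cast; omega] at this
  have hnotMem : ∀ t ∈ Finset.Icc 0 N, t ∉ ({s, p + 1} : Finset ℤ) →
      startWeight f (flipPath H p) t - startWeight f H t = 0 := by
    intro t _ ht
    simp only [Finset.mem_insert, Finset.mem_singleton, not_or] at ht
    exact sub_eq_zero.2 (hp.startWeight_flipPath hH h0 ht.2 fun _ h => ht.1 (h.start_unique hl))
  have hsubset : ({s, p + 1} : Finset ℤ) ⊆ Finset.Icc 0 N := by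
    simp only [Finset.insert_subset_iff, Finset.singleton_subset_iff]
    exact ⟨hH.mem_Icc_of_nonneg hs_nonneg, hH.mem_Icc_of_nonneg hh⟩
  have hright : startWeight f (flipPath H p) (p + 1) = 0 := by
    rw [startWeight, if_neg]
    rw [add_sub_cancel_right, hp.flipPath_self, flipPath_of_ne (by omega), hp.2]
    omega
  have hs_nonneg' : 0 ≤ flipPath H p s := by rw [flipPath_of_ne (by omega)]; exact hs_nonneg
  have hleft : startWeight f H s = f a :=
    IsExcursion.startWeight_eq (by rwa [sub_add_cancel]) hs_nonneg
  rw [posVariant, posVariant, ← Finset.sum_sub_distrib, ← Finset.sum_subset hsubset hnotMem,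
    Finset.sum_pair (by omega), hmerge.startWeight_eq hs_nonneg', hright, hr.startWeight_eq hh,
    hleft]
  ring

theorem IsValley.posVariant_flipPath_of_neg (hp : IsValley H p) (hH : IsPath N H) (h0 : f 0 = 0)
    (hh : H (p + 1) < 0) : posVariant f N (flipPath H p) = posVariant f N H := by
  refine Finset.sum_congr rfl fun s _ => ?_
  rcases eq_or_ne s (p + 1) with rfl | hs
  · rw [startWeight, startWeight, flipPath_of_ne (by omega : p + 1 ≠ p),
      if_neg fun h => hh.not_ge h.2, if_neg fun h => hh.not_ge h.2]
  · exact hp.startWeight_flipPath hH h0 hs fun hs_nonneg h => by linarith [h.eq, hp.1, hp.2]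

theorem IsValley.leftHalf_add_rightHalf_le (hp : IsValley H p) (hH : IsPath N H)
    (hh : 0 ≤ H (p + 1)) : 2 * (leftHalf N H (p - 1) + rightHalf H (p + 1) + 1 : ℤ) ≤ N := by
  have hl := hp.isExcursion_left hH hh
  have hr := hp.isExcursion_right hH hh
  have hs := Finset.mem_Icc.1 (hH.mem_Icc_of_nonneg (by rwa [← hl.eq, hp.1, ← hp.2]))
  have he := Finset.mem_Icc.1 (hH.mem_Icc_of_nonneg (by rwa [hr.eq]))
  omega

theorem IsPeak.posVariant_flipPath (hp : IsPeak H p) (hH : IsPath N H) (h0 : f 0 = 0)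
    (hp0 : 0 < p) (hpN : p < N) (hh : 0 ≤ H (p + 1)) :
    posVariant f N (flipPath H p) - posVariant f N H =
      f (leftHalf N H (p - 1)) + f (rightHalf H (p + 1)) -
        f (leftHalf N H (p - 1) + rightHalf H (p + 1) + 1) := by
  have key := hp.isValley_flipPath.posVariant_flipPath (f := f) (hH.flipPath hp0 hpN) h0
    (by rwa [flipPath_of_ne (by omega)])
  have hl : leftHalf N (flipPath H p) (p - 1) = leftHalf N H (p - 1) :=
    leftHalf_congr fun t ht => flipPath_of_ne (by omega)
  have hr : rightHalf (flipPath H p) (p + 1) = rightHalf H (p + 1) :=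
    rightHalf_congr fun t ht => flipPath_of_ne (by omega)
  rw [flipPath_flipPath, hl, hr] at key
  linarith

theorem IsPeak.posVariant_flipPath_of_neg (hp : IsPeak H p) (hH : IsPath N H) (h0 : f 0 = 0)
    (hp0 : 0 < p) (hpN : p < N) (hh : H (p + 1) < 0) :
    posVariant f N (flipPath H p) = posVariant f N H := by
  have key := hp.isValley_flipPath.posVariant_flipPath_of_neg (hH.flipPath hp0 hpN) h0
    (by rwa [flipPath_of_ne (by omega)])
  rw [← key, flipPath_flipPath]

end Flips

/-- The sites of the flips which do not increase the number of mismatches. A site is the position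
between the two letters that are exchanged, and a mismatch of the word is a position which is
neither a valley nor a peak; the comparisons with `0` and `N` discard the artificial steps of the
extended path. -/
noncomputable def allowedSites (N : ℤ) (H : ℤ → ℤ) : Finset ℤ :=
  (Finset.Ioo 0 N).filter fun p => H (p - 1) = H (p + 1) ∧
    ((2 ≤ p ∧ H (p - 2) ≠ H p) ∨ (p + 2 ≤ N ∧ H (p + 2) ≠ H p))

/-- The allowed flip sites whose two neighbours have nonnegative height. -/
noncomputable def posSites (N : ℤ) (H : ℤ → ℤ) : Finset ℤ :=
  (allowedSites N H).filter fun p => 0 ≤ H (p + 1)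

/-- The flip of the valley `p` extends the excursion on its right by one step to the left. -/
def IsLeftExtension (H : ℤ → ℤ) (p : ℤ) : Prop := IsValley H p ∧ H (p - 2) = H p ∧ H (p + 2) ≠ H p

/-- The flip of the peak `p` shortens the excursion that starts at `p - 1`. -/
def IsLeftReduction (H : ℤ → ℤ) (p : ℤ) : Prop := IsPeak H p ∧ 2 ≤ p ∧ H (p - 2) ≠ H p

/-- The part of the variation of the variant, increased by `δ`, that is charged to the left side
of the flip site `p`. The right side is charged by `leftCharge` for the reversed path. -/
noncomputable def leftCharge (f : ℕ → ℝ) (δ : ℝ) (H : ℤ → ℤ) (p : ℤ) : ℝ :=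
  (if IsLeftExtension H p then sideLoss f (rightHalf H (p + 1)) + δ else 0) -
    if IsLeftReduction H p then sideLoss f (rightHalf H (p + 1)) - δ else 0

theorem IsDriftWeight.sideLoss_le {n : ℕ} {f : ℕ → ℝ} {δ : ℝ} (hf : IsDriftWeight n f δ)
    (hn : 0 < n) (b : ℕ) : sideLoss f b ≤ f (b + 1) - f b := by
  rcases eq_or_ne b 0 with rfl | hb
  · have := hf.gap_nonneg.trans (hf.gap_le_sideLoss 0 hn)
    rw [sideLoss, if_pos rfl] at this ⊢
    rw [hf.zero, zero_add]
    linarith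
  · rw [sideLoss, if_neg hb]

theorem sum_le_sum_of_injOn {ι κ M : Type*} [AddCommMonoid M] [PartialOrder M]
    [IsOrderedAddMonoid M] {s : Finset ι} {t : Finset κ} {g : ι → M} {g' : κ → M} {τ : ι → κ}
    (hmaps : Set.MapsTo τ s t) (hinj : Set.InjOn τ s) (hle : ∀ i ∈ s, g i ≤ g' (τ i))
    (hnonneg : ∀ j ∈ t, 0 ≤ g' j) : ∑ i ∈ s, g i ≤ ∑ j ∈ t, g' j := by
  classical
  calc ∑ i ∈ s, g i ≤ ∑ i ∈ s, g' (τ i) := Finset.sum_le_sum hle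
    _ = ∑ j ∈ s.image τ, g' j := (Finset.sum_image hinj).symm
    _ ≤ ∑ j ∈ t, g' j := Finset.sum_le_sum_of_subset_of_nonneg
        (Finset.image_subset_iff.2 hmaps) fun j hj _ => hnonneg j hj

section Charges

variable {N : ℤ} {n : ℕ} {H : ℤ → ℤ} {f : ℕ → ℝ} {δ : ℝ} {p q : ℤ}

theorem mem_posSites : p ∈ posSites N H ↔
    (0 < p ∧ p < N) ∧ H (p - 1) = H (p + 1) ∧ 0 ≤ H (p + 1) ∧
      ((2 ≤ p ∧ H (p - 2) ≠ H p) ∨ (p + 2 ≤ N ∧ H (p + 2) ≠ H p)) := by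
  simp only [posSites, allowedSites, Finset.mem_filter, Finset.mem_Ioo]
  tauto

theorem reversePath_sub_add (a : ℤ) : reversePath N H (N - p + a) = H (p - a) := by
  rw [sub_add, reversePath_sub]

theorem reversePath_sub_sub (a : ℤ) : reversePath N H (N - p - a) = H (p + a) := by
  rw [sub_sub, reversePath_sub]

theorem mem_posSites_reverse : N - p ∈ posSites N (reversePath N H) ↔ p ∈ posSites N H := by
  simp only [mem_posSites, reversePath_sub_add, reversePath_sub_sub, reversePath_sub]
  grind

theorem IsPath.rightHalf_eq_zero_iff (hH : IsPath N H) (hq : 0 ≤ H q) :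
    rightHalf H q = 0 ↔ H (q + 1) < H q := by
  refine ⟨fun h => ?_, rightHalf_eq_zero_of_lt⟩
  simpa [h] using (hH.isRightEnd_rightHalf hq).end_lt

theorem IsPath.leftHalf_eq_zero_iff (hH : IsPath N H) (hq : 0 ≤ H q) :
    leftHalf N H q = 0 ↔ H (q - 1) < H q := by
  rw [leftHalf, hH.reverse.rightHalf_eq_zero_iff (by rwa [reversePath_sub]), reversePath_sub_add,
    reversePath_sub]

theorem IsValley.leftCharge_eq (hp : IsValley H p) : leftCharge f δ H p =
    if H (p - 2) = H p ∧ H (p + 2) ≠ H p then sideLoss f (rightHalf H (p + 1)) + δ else 0 := by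
  have hpeak : ¬IsPeak H p := fun h => by linarith [hp.1, h.1]
  simp only [leftCharge, IsLeftExtension, IsLeftReduction, hp, hpeak, true_and, false_and,
    if_false, sub_zero]

theorem IsPeak.leftCharge_eq (hp : IsPeak H p) : leftCharge f δ H p =
    -if 2 ≤ p ∧ H (p - 2) ≠ H p then sideLoss f (rightHalf H (p + 1)) - δ else 0 := by
  have hvalley : ¬IsValley H p := fun h => by linarith [hp.1, h.1]
  simp only [leftCharge, IsLeftExtension, IsLeftReduction, hp, hvalley, true_and, false_and,
    if_false, zero_sub]

theorem IsValley.reverse (hp : IsValley H p) : IsValley (reversePath N H) (N - p) := by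
  rw [IsValley, reversePath_sub_add, reversePath_sub_sub, reversePath_sub]
  exact hp.symm

theorem IsPeak.reverse (hp : IsPeak H p) : IsPeak (reversePath N H) (N - p) := by
  rw [IsPeak, reversePath_sub_add, reversePath_sub_sub, reversePath_sub]
  exact hp.symm

theorem rightHalf_reverse : rightHalf (reversePath N H) (N - p + 1) = leftHalf N H (p - 1) := by
  rw [leftHalf, sub_add]

theorem IsValley.variation_add_le (hp : IsValley H p) (hH : IsPath (2 * n) H)
    (hf : IsDriftWeight n f δ) (hmem : p ∈ posSites (2 * n) H) :
    posVariant f (2 * n) (flipPath H p) - posVariant f (2 * n) H + δ ≤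
      leftCharge f δ H p + leftCharge f δ (reversePath (2 * n) H) (2 * n - p) := by
  obtain ⟨-, hlr, hh, hallowed⟩ := mem_posSites.1 hmem
  have hpair := hp.leftHalf_add_rightHalf_le hH hh
  have ha := hH.leftHalf_eq_zero_iff (hlr ▸ hh)
  have hb := hH.rightHalf_eq_zero_iff hh
  have hstepl := hH.step_pred (p - 1)
  have hstepr := hH.step (p + 1)
  rw [sub_sub, one_add_one_eq_two, hp.1] at ha hstepl
  rw [add_assoc, one_add_one_eq_two, hp.2] at hb hstepr
  rw [hp.posVariant_flipPath hH hf.zero hh, hp.leftCharge_eq, hp.reverse.leftCharge_eq,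
    rightHalf_reverse, reversePath_sub_add, reversePath_sub_sub, reversePath_sub]
  set a := leftHalf (2 * n) H (p - 1)
  set b := rightHalf H (p + 1)
  rcases Nat.eq_zero_or_pos a with ha0 | ha0
  · have hb0 : b ≠ 0 := by omega
    rw [if_pos (by omega), if_neg (by omega), ha0, hf.zero, sideLoss, if_neg hb0, zero_add]
    linarith
  rcases Nat.eq_zero_or_pos b with hb0 | hb0
  · rw [if_neg (by omega), if_pos (by omega), hb0, hf.zero, sideLoss, if_neg ha0.ne', add_zero]
    linarith
  · rw [if_neg (by omega), if_neg (by omega)]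
    linarith [hf.merge_add_le ha0 hb0 (by omega)]

theorem IsPeak.variation_add_le (hp : IsPeak H p) (hH : IsPath (2 * n) H)
    (hf : IsDriftWeight n f δ) (hmem : p ∈ posSites (2 * n) H) :
    posVariant f (2 * n) (flipPath H p) - posVariant f (2 * n) H + δ ≤
      leftCharge f δ H p + leftCharge f δ (reversePath (2 * n) H) (2 * n - p) := by
  obtain ⟨⟨h0, hN⟩, hlr, hh, hallowed⟩ := mem_posSites.1 hmem
  have hleft : H (p - 2) ≠ H p → leftHalf (2 * n) H (p - 1) = 0 := fun h => by
    have := hH.step_pred (p - 1)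
    rw [sub_sub, one_add_one_eq_two, hp.1] at this
    rw [hH.leftHalf_eq_zero_iff (hlr ▸ hh), sub_sub, one_add_one_eq_two, hp.1]
    omega
  have hright : H (p + 2) ≠ H p → rightHalf H (p + 1) = 0 := fun h => by
    have := hH.step (p + 1)
    rw [add_assoc, one_add_one_eq_two, hp.2] at this
    rw [hH.rightHalf_eq_zero_iff hh, add_assoc, one_add_one_eq_two, hp.2]
    omega
  rw [hp.posVariant_flipPath hH hf.zero h0 hN hh, hp.leftCharge_eq, hp.reverse.leftCharge_eq,
    rightHalf_reverse, reversePath_sub_sub, reversePath_sub]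
  set a := leftHalf (2 * n) H (p - 1)
  set b := rightHalf H (p + 1)
  have hδ := hf.gap_nonneg
  have hlossa := hf.sideLoss_le (by omega) a
  have hlossb := hf.sideLoss_le (by omega) b
  by_cases hl : 2 ≤ p ∧ H (p - 2) ≠ H p <;> by_cases hr : 2 ≤ 2 * n - p ∧ H (p + 2) ≠ H p
  · rw [if_pos hl, if_pos hr, hleft hl.2, hright hr.2, hf.zero, sideLoss, if_pos rfl]
    linarith
  · rw [if_pos hl, if_neg hr, hleft hl.2, hf.zero, zero_add, zero_add]
    linarith
  · rw [if_neg hl, if_pos hr, hright hr.2, hf.zero, add_zero, add_zero]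
    linarith
  · omega

theorem variation_add_le (hH : IsPath (2 * n) H) (hf : IsDriftWeight n f δ)
    (hmem : p ∈ posSites (2 * n) H) :
    posVariant f (2 * n) (flipPath H p) - posVariant f (2 * n) H + δ ≤
      leftCharge f δ H p + leftCharge f δ (reversePath (2 * n) H) (2 * n - p) := by
  have hlr := (mem_posSites.1 hmem).2.1
  rcases hH.step p with h | h
  · exact IsValley.variation_add_le ⟨by rw [hlr, h], h⟩ hH hf hmem
  · exact IsPeak.variation_add_le ⟨by rw [hlr, h], h⟩ hH hf hmem

theorem IsPath.exists_ascent_top (hH : IsPath N H) (p : ℤ) :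
    ∃ q, p ≤ q ∧ (∀ u, p ≤ u → u ≤ q → H u = H p + (u - p)) ∧ H (q + 1) = H q - 1 := by
  obtain ⟨q, ⟨hpq, hdesc⟩, hleast⟩ := Int.exists_least_of_bdd
    (P := fun q => p ≤ q ∧ H (q + 1) = H q - 1) ⟨p, fun _ h => h.1⟩
    ⟨max p N, le_max_left p N, by
      rw [hH.right _ (le_max_right p N), hH.right _ (by omega)]; ring⟩
  refine ⟨q, hpq, fun u hpu => ?_, hdesc⟩
  induction u, hpu using Int.leInduction with
  | base => simp
  | succ u hpu ih =>
    intro huq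
    rcases hH.step u with h | h
    · linarith [ih (by omega)]
    · have := hleast u ⟨hpu, h⟩
      omega

theorem IsPath.rightHalf_lt_of_ascent (hH : IsPath N H) (hh : 0 ≤ H (p + 1)) (hpq : p + 2 ≤ q)
    (hasc : ∀ u, p ≤ u → u ≤ q → H u = H p + (u - p)) (hdesc : H (q + 1) = H q - 1) :
    rightHalf H (q + 1) < rightHalf H (p + 1) := by
  have hp₁ := hasc (p + 1) (by omega) (by omega)
  have hq₁ := hasc q (by omega) le_rfl
  have hp := hH.isRightEnd_rightHalf hh
  have hq := hH.isRightEnd_rightHalf (q := q + 1) (by omega)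
  have hend := hp.end_lt
  set e := p + 1 + 2 * (rightHalf H (p + 1) : ℤ)
  have hqe : q ≤ e := by
    by_contra! h
    have := hasc (e + 1) (by linarith [hp.le]) h
    linarith [hp.le]
  by_contra! hle
  linarith [hq.le_height (e + 1) (by omega) (by omega)]

theorem IsLeftExtension.exists_reduction (hp : IsLeftExtension H p) (hH : IsPath N H)
    (hmem : p ∈ posSites N H) :
    ∃ q ∈ posSites N H, IsLeftReduction H q ∧ p + 2 ≤ q ∧
      (∀ u, p ≤ u → u ≤ q → H u = H p + (u - p)) ∧ rightHalf H (q + 1) < rightHalf H (p + 1) := by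
  obtain ⟨⟨h0, hN⟩, hlr, hh, -⟩ := mem_posSites.1 hmem
  obtain ⟨⟨-, hup⟩, -, hup'⟩ := hp
  obtain ⟨q, hpq, hasc, hdesc⟩ := hH.exists_ascent_top p
  have hstep := hH.step (p + 1)
  rw [add_assoc, one_add_one_eq_two] at hstep
  have hpq' : p + 2 ≤ q := by
    have hne : q ≠ p := by rintro rfl; omega
    have hne' : q ≠ p + 1 := by rintro rfl; rw [add_assoc, one_add_one_eq_two] at hdesc; omega
    omega
  have hq := hasc q (by omega) le_rfl
  have hq₁ := hasc (q - 1) (by omega) (by omega)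
  have hq₂ := hasc (q - 2) (by omega) (by omega)
  have hqN := Finset.mem_Icc.1 (hH.mem_Icc_of_nonneg (t := q + 1) (by omega))
  exact ⟨q, mem_posSites.2 (by omega), ⟨⟨by omega, hdesc⟩, by omega, by omega⟩, hpq', hasc,
    hH.rightHalf_lt_of_ascent hh hpq' hasc hdesc⟩

theorem IsPath.rightHalf_lt (hH : IsPath (2 * n) H) (hmem : p ∈ posSites (2 * n) H) :
    rightHalf H (p + 1) < n := by
  obtain ⟨⟨h0, -⟩, -, hh, -⟩ := mem_posSites.1 hmem
  have he := hH.mem_Icc_of_nonneg ((hH.isRightEnd_rightHalf hh).eq ▸ hh)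
  rw [Finset.mem_Icc] at he
  omega

theorem sum_leftCharge_nonpos (hH : IsPath (2 * n) H) (hf : IsDriftWeight n f δ) :
    ∑ p ∈ posSites (2 * n) H, leftCharge f δ H p ≤ 0 := by
  choose! τ hmem hred hle hasc hlt using
    fun p (h : p ∈ posSites (2 * n) H ∧ IsLeftExtension H p) => h.2.exists_reduction hH h.1
  have top_le_start : ∀ p₁ p₂, p₁ ∈ posSites (2 * n) H ∧ IsLeftExtension H p₁ →
      p₂ ∈ posSites (2 * n) H ∧ IsLeftExtension H p₂ → τ p₁ = τ p₂ → p₂ ≤ p₁ := by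
    intro p₁ p₂ h₁ h₂ heq
    by_contra! hlt
    have hle₂ := hle p₂ h₂
    have hpred := hasc p₁ h₁ (p₂ - 1) (by omega) (by omega)
    have hself := hasc p₁ h₁ p₂ hlt.le (by omega)
    linarith [h₂.2.1.1]
  simp only [leftCharge]
  rw [Finset.sum_sub_distrib, ← Finset.sum_filter, ← Finset.sum_filter, sub_nonpos]
  refine sum_le_sum_of_injOn (τ := τ) ?_ ?_ ?_ ?_
  · intro p hp
    rw [Finset.mem_coe, Finset.mem_filter] at hp ⊢
    exact ⟨hmem p hp, hred p hp⟩
  · intro p₁ h₁ p₂ h₂ heq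
    rw [Finset.mem_coe, Finset.mem_filter] at h₁ h₂
    exact le_antisymm (top_le_start _ _ h₂ h₁ heq.symm) (top_le_start _ _ h₁ h₂ heq)
  · intro p hp
    rw [Finset.mem_filter] at hp
    linarith [hf.sideLoss_add_le (hlt p hp) (hH.rightHalf_lt hp.1)]
  · intro q hq
    exact sub_nonneg.2 (hf.gap_le_sideLoss _ (hH.rightHalf_lt (Finset.mem_filter.1 hq).1))

theorem sum_posSites_reverse (g : ℤ → ℝ) :
    ∑ p ∈ posSites N H, g (N - p) = ∑ p ∈ posSites N (reversePath N H), g p :=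
  Finset.sum_nbij' (N - ·) (N - ·) (fun _ hp => mem_posSites_reverse.2 hp)
    (fun p hp => by rw [← mem_posSites_reverse, sub_sub_cancel]; exact hp)
    (fun _ _ => sub_sub_cancel _ _) (fun _ _ => sub_sub_cancel _ _) fun _ _ => rfl

theorem sum_posSites_variation_le (hH : IsPath (2 * n) H) (hf : IsDriftWeight n f δ) :
    ∑ p ∈ posSites (2 * n) H, (posVariant f (2 * n) (flipPath H p) - posVariant f (2 * n) H) ≤
      -(δ * (posSites (2 * n) H).card) := by
  have hsum := Finset.sum_le_sum fun p hp => variation_add_le hH hf hp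
  rw [Finset.sum_add_distrib, Finset.sum_add_distrib, Finset.sum_const, nsmul_eq_mul,
    sum_posSites_reverse (leftCharge f δ (reversePath (2 * n) H))] at hsum
  linarith [sum_leftCharge_nonpos hH hf, sum_leftCharge_nonpos hH.reverse hf]

theorem sum_allowedSites_variation (hH : IsPath N H) (h0 : f 0 = 0) :
    ∑ p ∈ allowedSites N H, (posVariant f N (flipPath H p) - posVariant f N H) =
      ∑ p ∈ posSites N H, (posVariant f N (flipPath H p) - posVariant f N H) := by
  refine (Finset.sum_subset (Finset.filter_subset _ _) fun p hp hnot => sub_eq_zero.2 ?_).symm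
  have hneg : H (p + 1) < 0 := not_le.1 fun h => hnot (Finset.mem_filter.2 ⟨hp, h⟩)
  obtain ⟨hpN, hlr, -⟩ := Finset.mem_filter.1 hp
  rw [Finset.mem_Ioo] at hpN
  rcases hH.step p with h | h
  · exact IsValley.posVariant_flipPath_of_neg ⟨by rw [hlr, h], h⟩ hH h0 hneg
  · exact IsPeak.posVariant_flipPath_of_neg ⟨by rw [hlr, h], h⟩ hH h0 hpN.1 hpN.2 hneg

end Charges

section Words

variable {n : ℕ} {w : Word} {i : ℕ}

theorem count_map_not (w : Word) (b : Bool) : (w.map not).count b = w.count !b := by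
  simpa using List.count_map_of_injective w not Bool.not_injective (!b)

theorem height_map_not (w : Word) (s : ℕ) : height (w.map not) s = -height w s := by
  simp [height, ← List.map_take, count_map_not]

theorem height_zero (w : Word) : height w 0 = 0 := by simp [height]

theorem height_cons_succ (x : Bool) (w : Word) (j : ℕ) :
    height (x :: w) (j + 1) = (if x then 1 else -1) + height w j := by
  cases x <;> simp [height] <;> ring

theorem height_append_of_le (u v : Word) {j : ℕ} (h : j ≤ u.length) :
    height (u ++ v) j = height u j := by
  simp [height, List.take_append_of_le_length h]

theorem height_append_add (u v : Word) (j : ℕ) :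
    height (u ++ v) (u.length + j) = height u u.length + height v j := by
  simp [height, List.take_length_add_append]
  ring

theorem height_succ (hi : i < w.length) :
    height w (i + 1) = height w i + if w.getD i true then 1 else -1 := by
  induction w generalizing i with
  | nil => simp at hi
  | cons x w ih =>
    cases i with
    | zero => simp [height_cons_succ, height_zero]
    | succ i =>
      rw [height_cons_succ, height_cons_succ, ih (by simpa using hi)]
      simp [add_assoc]

theorem height_succ_or (hi : i < w.length) :
    height w (i + 1) = height w i + 1 ∨ height w (i + 1) = height w i - 1 := by
  rw [height_succ hi]
  split_ifs <;> omega

theorem height_eq_height_add_two_iff (hi : i + 1 < w.length) :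
    height w i = height w (i + 2) ↔ w.getD i true ≠ w.getD (i + 1) true := by
  rw [height_succ hi, height_succ (by omega)]
  cases w.getD i true <;> cases w.getD (i + 1) true <;> simp <;> omega

theorem IsConfig.count_false (hw : IsConfig n w) : w.count false = n := by
  have := List.count_true_add_count_false w
  rw [hw.1, hw.2] at this
  omega

theorem IsConfig.height_length (hw : IsConfig n w) : height w w.length = 0 := by
  rw [height, List.take_length, hw.2, hw.count_false, sub_self]

theorem IsConfig.map_not (hw : IsConfig n w) : IsConfig n (w.map not) :=
  ⟨by simpa using hw.1, by rw [count_map_not, Bool.not_true, hw.count_false]⟩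

end Words

/-- The height function of `w`, extended to `ℤ` as in `IsPath`. -/
noncomputable def extPath (w : Word) (t : ℤ) : ℤ :=
  if t < 0 then t else if t ≤ w.length then height w t.toNat else w.length - t

section ExtPath

variable {n : ℕ} {w : Word} {t : ℤ}

theorem extPath_eq_height {s : ℕ} (hts : t = s) (hs : s ≤ w.length) :
    extPath w t = height w s := by
  subst hts
  simp [extPath, hs]

theorem extPath_of_nonpos (ht : t ≤ 0) : extPath w t = t := by
  rcases ht.eq_or_lt with rfl | ht
  · exact (extPath_eq_height (s := 0) rfl (Nat.zero_le _)).trans (height_zero w)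
  · rw [extPath, if_pos ht]

theorem IsConfig.extPath_of_le (hw : IsConfig n w) (ht : 2 * n ≤ t) :
    extPath w t = 2 * n - t := by
  have hlen : (w.length : ℤ) = 2 * n := by exact_mod_cast hw.1
  rcases ht.eq_or_lt with rfl | ht
  · rw [extPath_eq_height hlen.symm le_rfl, hw.height_length, sub_self]
  · rw [extPath, if_neg (by omega), if_neg (by omega), hlen]

theorem IsConfig.isPath_extPath (hw : IsConfig n w) : IsPath (2 * n) (extPath w) where
  left _ ht := extPath_of_nonpos ht
  right _ ht := hw.extPath_of_le ht
  step t := by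
    have hlen := hw.1
    rcases lt_or_ge t 0 with h0 | h0
    · left
      rw [extPath_of_nonpos h0.le, extPath_of_nonpos h0]
    rcases lt_or_ge t (2 * n) with hn | hn
    · lift t to ℕ using h0
      rw [extPath_eq_height (s := t) rfl (by omega),
        extPath_eq_height (s := t + 1) (Nat.cast_succ t).symm (by omega)]
      exact height_succ_or (by omega)
    · right
      rw [hw.extPath_of_le hn, hw.extPath_of_le (by omega)]
      ring

end ExtPath

section WordFlips

variable {n : ℕ} {w : Word} {i : ℕ}

theorem CanFlip.exists_eq_append (h : CanFlip w i) :
    ∃ u x v, w = u ++ x :: (!x) :: v ∧ u.length = i ∧ flip w i = u ++ (!x) :: x :: v := by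
  obtain ⟨hlen, hne⟩ := h
  induction w generalizing i with
  | nil => simp at hlen
  | cons a w ih =>
    cases i with
    | zero =>
      cases w with
      | nil => simp at hlen
      | cons b w => refine ⟨[], a, w, ?_, rfl, ?_⟩ <;> cases a <;> cases b <;> simp_all [flip]
    | succ i =>
      obtain ⟨u, x, v, rfl, rfl, hflip⟩ := ih (i := i) (by simpa using hlen) (by simpa using hne)
      refine ⟨a :: u, x, v, rfl, rfl, ?_⟩
      rw [List.cons_append, ← hflip]
      simp [flip]

theorem IsConfig.isConfig_flip (hw : IsConfig n w) (h : CanFlip w i) : IsConfig n (flip w i) := by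
  obtain ⟨u, x, v, hw_eq, -, hflip⟩ := h.exists_eq_append
  have hperm : (flip w i).Perm w := by
    rw [hflip, hw_eq]
    exact (List.Perm.swap x (!x) v).append_left u
  exact ⟨hperm.length_eq.trans hw.1, (hperm.count_eq true).trans hw.2⟩

theorem length_flip (w : Word) (i : ℕ) : (flip w i).length = w.length := by simp [flip]

theorem height_flip_of_ne {t : ℕ} (h : CanFlip w i) (ht : t ≠ i + 1) :
    height (flip w i) t = height w t := by
  obtain ⟨u, x, v, hw_eq, rfl, hflip⟩ := h.exists_eq_append
  rw [hflip]
  conv_rhs => rw [hw_eq]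
  rcases le_or_gt t u.length with hle | hlt
  · rw [height_append_of_le _ _ hle, height_append_of_le _ _ hle]
  · obtain ⟨j, rfl⟩ : ∃ j, t = u.length + (j + 2) := ⟨t - u.length - 2, by omega⟩
    rw [height_append_add, height_append_add]
    simp only [height_cons_succ]
    ring

theorem height_flip_self (h : CanFlip w i) :
    height (flip w i) (i + 1) = height w i + height w (i + 2) - height w (i + 1) := by
  obtain ⟨u, x, v, hw_eq, rfl, hflip⟩ := h.exists_eq_append
  rw [hflip]
  conv_rhs => rw [hw_eq]
  rw [height_append_of_le _ _ le_rfl, height_append_add, height_append_add, height_append_add]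
  simp only [height_cons_succ, height_zero]
  ring

theorem extPath_flip (h : CanFlip w i) : extPath (flip w i) = flipPath (extPath w) (i + 1) := by
  have hi := h.1
  funext t
  rcases eq_or_ne t (i + 1) with rfl | ht
  · rw [flipPath_self, add_sub_cancel_right,
      extPath_eq_height (s := i + 1) (Nat.cast_succ i).symm (by rw [length_flip]; omega),
      extPath_eq_height (s := i) rfl (by omega),
      extPath_eq_height (s := i + 1) (Nat.cast_succ i).symm (by omega),
      extPath_eq_height (t := i + 1 + 1) (s := i + 2) (by omega) (by omega), height_flip_self h]
  · rw [flipPath_of_ne ht]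
    simp only [extPath, length_flip]
    split_ifs with hneg hle
    · rfl
    · exact height_flip_of_ne h (by omega)
    · rfl

theorem getD_map_not (hi : i < w.length) : (w.map not).getD i true = !w.getD i true := by
  simp [List.getD_eq_getElem?_getD, hi]

theorem canFlip_map_not : CanFlip (w.map not) i ↔ CanFlip w i := by
  simp only [CanFlip, List.length_map]
  refine and_congr_right fun h => ?_
  rw [getD_map_not h, getD_map_not (by omega), ne_eq, ne_eq, Bool.not_inj_iff]

theorem flip_map_not (h : CanFlip w i) : flip (w.map not) i = (flip w i).map not := by
  simp only [flip]
  rw [getD_map_not h.1, getD_map_not (by have := h.1; omega)]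
  simp [List.map_set]

end WordFlips

section Mismatches

variable {n : ℕ} {w : Word} {i : ℕ}

theorem mismatches_singleton (x : Bool) : mismatches [x] = 0 := rfl

theorem mismatches_cons_cons (x y : Bool) (w : Word) :
    mismatches (x :: y :: w) = (if x = y then 1 else 0) + mismatches (y :: w) := by
  simp only [mismatches, List.tail_cons, List.zip_cons_cons, List.countP_cons, beq_iff_eq]
  ring

theorem mismatches_append_cons (u : Word) (x : Bool) (v : Word) :
    mismatches (u ++ x :: v) = mismatches (u ++ [x]) + mismatches (x :: v) := by
  induction u with
  | nil => simp [mismatches_singleton]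
  | cons a u ih =>
    cases u with
    | nil => simp [mismatches_cons_cons, mismatches_singleton]
    | cons b u =>
      simp only [List.cons_append] at ih ⊢
      rw [mismatches_cons_cons, mismatches_cons_cons, ih]
      ring

theorem mismatches_append_pair (u : Word) (z x : Bool) :
    mismatches (u ++ [z, x]) = mismatches (u ++ [z]) + if z = x then 1 else 0 := by
  rw [mismatches_append_cons, mismatches_cons_cons, mismatches_singleton, add_zero]

theorem mismatches_map_not (w : Word) : mismatches (w.map not) = mismatches w := by
  induction w with
  | nil => rfl
  | cons a w ih =>
    cases w with
    | nil => rfl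
    | cons b w =>
      simp only [List.map_cons] at ih ⊢
      rw [mismatches_cons_cons, mismatches_cons_cons, ih]
      simp

theorem mismatches_eq_zero (h : ∀ i, i + 1 < w.length → w.getD i true ≠ w.getD (i + 1) true) :
    mismatches w = 0 := by
  induction w with
  | nil => rfl
  | cons a w ih =>
    cases w with
    | nil => exact mismatches_singleton a
    | cons b w =>
      rw [mismatches_cons_cons, ih fun i hi => by simpa using h (i + 1) (by simpa using hi),
        if_neg (by simpa using h 0 (by simp))]

theorem mismatches_swap_le_iff (u : Word) (x : Bool) (v : Word) (h : u ≠ [] ∨ v ≠ []) :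
    mismatches (u ++ (!x) :: x :: v) ≤ mismatches (u ++ x :: (!x) :: v) ↔
      u.getLast? = some x ∨ v.head? = some !x := by
  rw [mismatches_append_cons, mismatches_append_cons u x, mismatches_cons_cons,
    mismatches_cons_cons]
  rcases List.eq_nil_or_concat u with rfl | ⟨u, z, rfl⟩ <;> rcases v with _ | ⟨y, v⟩
  · simp at h
  · rw [mismatches_cons_cons, mismatches_cons_cons]
    cases x <;> cases y <;> simp [mismatches_singleton]
  · simp only [List.concat_eq_append, List.append_assoc, List.singleton_append,
      mismatches_append_pair]
    cases x <;> cases z <;> simp [mismatches_singleton]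
  · simp only [List.concat_eq_append, List.append_assoc, List.singleton_append,
      mismatches_append_pair, mismatches_cons_cons]
    cases x <;> cases y <;> cases z <;> simp <;> omega

theorem canFlip_of_mem_allowedFlips (hi : i ∈ allowedFlips w) : CanFlip w i :=
  (Finset.mem_filter.1 hi).2.1

theorem mem_allowedFlips_iff (hw : 2 < w.length) : i ∈ allowedFlips w ↔
    CanFlip w i ∧ ((0 < i ∧ w.getD (i - 1) true = w.getD i true) ∨
      (i + 2 < w.length ∧ w.getD (i + 1) true = w.getD (i + 2) true)) := by
  simp only [allowedFlips, Finset.mem_filter, Finset.mem_range]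
  rw [and_iff_right_of_imp fun h => (Nat.lt_succ_self i).trans h.1.1]
  refine and_congr_right fun h => ?_
  obtain ⟨u, x, v, hw_eq, rfl, hflip⟩ := h.exists_eq_append
  have hne : u ≠ [] ∨ v ≠ [] := by
    by_contra! hnil
    simp [hw_eq, hnil.1, hnil.2] at hw
  rw [hflip]
  conv_lhs => rw [hw_eq]
  rw [mismatches_swap_le_iff u x v hne, hw_eq]
  refine or_congr ?_ ?_
  · rcases List.eq_nil_or_concat u with rfl | ⟨u, z, rfl⟩ <;> simp
  · rcases v with _ | ⟨y, v⟩
    · simp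
    · cases x <;> cases y <;> simp

theorem allowedFlips_map_not (w : Word) : allowedFlips (w.map not) = allowedFlips w := by
  ext i
  simp only [allowedFlips, Finset.mem_filter, List.length_map, canFlip_map_not]
  refine and_congr_right fun _ => and_congr_right fun h => ?_
  rw [flip_map_not h, mismatches_map_not, mismatches_map_not]

theorem IsConfig.mem_allowedSites_iff (hn : 2 ≤ n) (hw : IsConfig n w) :
    (i : ℤ) + 1 ∈ allowedSites (2 * n) (extPath w) ↔ i ∈ allowedFlips w := by
  have hlen := hw.1
  rw [mem_allowedFlips_iff (by omega)]
  simp only [allowedSites, Finset.mem_filter, Finset.mem_Ioo, CanFlip, ← and_assoc]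
  by_cases hi : i + 1 < w.length
  swap
  · exact iff_of_false (fun h => hi (by omega)) fun h => hi h.1.1
  have hpred : extPath w ((i : ℤ) + 1 - 1) = height w i := extPath_eq_height (by omega) (by omega)
  have hself : extPath w ((i : ℤ) + 1) = height w (i + 1) := extPath_eq_height rfl (by omega)
  have hsucc : extPath w ((i : ℤ) + 1 + 1) = height w (i + 2) :=
    extPath_eq_height (by omega) (by omega)
  rw [hpred, hself, hsucc, height_eq_height_add_two_iff hi]
  refine and_congr (and_congr_left' (by omega)) (or_congr ?_ ?_)
  · rcases i with _ | j
    · simp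
    · have hpred₂ : extPath w (((j + 1 : ℕ) : ℤ) + 1 - 2) = height w j :=
        extPath_eq_height (by omega) (by omega)
      rw [hpred₂, ne_eq, height_eq_height_add_two_iff (by omega), not_not, Nat.add_sub_cancel]
      exact and_congr_left' (by omega)
  · rw [show (i : ℤ) + 1 + 2 ≤ 2 * n ↔ i + 2 < w.length by omega]
    refine and_congr_right fun hi₂ => ?_
    have hsucc₂ : extPath w ((i : ℤ) + 1 + 2) = height w (i + 1 + 2) :=
      extPath_eq_height (by omega) (by omega)
    rw [hsucc₂, ne_comm, ne_eq, height_eq_height_add_two_iff (by omega), not_not]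

theorem IsConfig.allowedSites_eq_image (hn : 2 ≤ n) (hw : IsConfig n w) :
    allowedSites (2 * n) (extPath w) = (allowedFlips w).image fun i : ℕ => (i : ℤ) + 1 := by
  ext p
  simp only [Finset.mem_image]
  constructor
  · intro hp
    have h0 : 0 < p := (Finset.mem_Ioo.1 (Finset.mem_filter.1 hp).1).1
    obtain ⟨i, rfl⟩ : ∃ i : ℕ, (i : ℤ) + 1 = p := ⟨(p - 1).toNat, by omega⟩
    exact ⟨i, (hw.mem_allowedSites_iff hn).1 hp, rfl⟩
  · rintro ⟨i, hi, rfl⟩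
    exact (hw.mem_allowedSites_iff hn).2 hi

theorem exists_not_iff_succ {P : ℕ → Prop} {j k m : ℕ} (hj : j < m) (hk : k < m) (hPj : P j)
    (hPk : ¬P k) : ∃ i, i + 1 < m ∧ ¬(P i ↔ P (i + 1)) := by
  by_contra! h
  have hconst : ∀ i < m, P i ↔ P 0 := by
    intro i hi
    induction i with
    | zero => rfl
    | succ i ih => rw [← h i hi, ih (by omega)]
  exact hPk ((hconst k hk).2 ((hconst j hj).1 hPj))

theorem IsConfig.exists_canFlip (hn : 0 < n) (hw : IsConfig n w) : ∃ i, CanFlip w i := by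
  by_contra! hno
  have hchain : w.IsChain (· = ·) := by
    rw [List.isChain_iff_getElem]
    intro i hi
    have := hno i
    simp only [CanFlip, not_and, not_not] at this
    simpa [List.getD_eq_getElem?_getD, hi, (Nat.lt_succ_self i).trans hi] using this hi
  obtain ⟨a, ha⟩ : ∃ a, a ∈ w.head? := by
    rcases w with _ | ⟨a, w⟩
    · have := hw.1
      simp at this
      omega
    · exact ⟨a, rfl⟩
  have hconst := List.isChain_eq_iff_eq_replicate.1 hchain a ha
  have htrue := hw.2
  have hfalse := hw.count_false
  rw [hconst, List.count_replicate] at htrue hfalse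
  cases a <;> simp at htrue hfalse <;> omega

theorem IsConfig.allowedFlips_nonempty (hn : 2 ≤ n) (hw : IsConfig n w) (hE : 0 < mismatches w) :
    (allowedFlips w).Nonempty := by
  have hlen := hw.1
  obtain ⟨j, hj, hj_eq⟩ : ∃ j, j + 1 < w.length ∧ w.getD j true = w.getD (j + 1) true := by
    by_contra! h
    exact hE.ne' (mismatches_eq_zero h)
  obtain ⟨k, hk, hk_ne⟩ := hw.exists_canFlip (by omega)
  obtain ⟨i, hi, hne⟩ := exists_not_iff_succ (m := w.length - 1)
    (P := fun i => w.getD i true = w.getD (i + 1) true) (by omega) (by omega) hj_eq hk_ne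
  by_cases heq : w.getD i true = w.getD (i + 1) true
  · exact ⟨i + 1, (mem_allowedFlips_iff (by omega)).2
      ⟨⟨by omega, by tauto⟩, Or.inl ⟨i.succ_pos, heq⟩⟩⟩
  · exact ⟨i, (mem_allowedFlips_iff (by omega)).2
      ⟨⟨by omega, heq⟩, Or.inr ⟨by omega, by tauto⟩⟩⟩

end Mismatches

section DyckFactors

variable {n : ℕ} {w : Word} {s l : ℕ}

theorem height_add (w : Word) (s i : ℕ) : height w (s + i) =
    height w s + ((factor w s i).count true - (factor w s i).count false) := by
  simp only [height, factor, List.take_add, List.count_append]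
  push_cast
  ring

theorem take_factor (w : Word) (s : ℕ) {i l : ℕ} (h : i ≤ l) :
    (factor w s l).take i = factor w s i := by
  simp [factor, List.take_take, h]

theorem factor_map_not (w : Word) (s l : ℕ) : factor (w.map not) s l = (factor w s l).map not := by
  simp [factor, ← List.map_drop, ← List.map_take]

theorem isPosDyckAt_iff : IsPosDyckAt w s l ↔
    0 < l ∧ s + l ≤ w.length ∧ height w (s + l) = height w s ∧
      (∀ i ≤ l, height w s ≤ height w (s + i)) ∧ 0 ≤ height w s := by
  refine and_congr_right fun _ => and_congr_right fun _ => and_congr ?_ (and_congr_left' ?_)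
  · rw [height_add]
    omega
  · refine forall₂_congr fun i hi => ?_
    rw [take_factor w s hi, height_add]
    omega

theorem isNegDyckAt_iff : IsNegDyckAt w s l ↔ IsPosDyckAt (w.map not) s l := by
  simp only [IsNegDyckAt, IsPosDyckAt, factor_map_not, ← List.map_take, count_map_not,
    height_map_not, List.length_map, Bool.not_true, Bool.not_false, Left.nonneg_neg_iff]
  exact and_congr_right fun _ => and_congr_right fun _ => and_congr_left' eq_comm

theorem isDyckAt_map_not : IsDyckAt (w.map not) s l ↔ IsDyckAt w s l := by
  have hinv : (w.map not).map not = w := by simp [Function.comp_def]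
  simp only [IsDyckAt, isNegDyckAt_iff, hinv]
  exact or_comm

theorem isMaxDyckAt_map_not : IsMaxDyckAt (w.map not) s l ↔ IsMaxDyckAt w s l := by
  simp only [IsMaxDyckAt, isDyckAt_map_not, height_map_not, neg_inj]

theorem IsPosDyckAt.not_isNegDyckAt {s' l' : ℕ} (h : IsPosDyckAt w s l)
    (heq : height w s' = height w s) (hs : s' ≤ s) (hl : s + l ≤ s' + l') :
    ¬IsNegDyckAt w s' l' := by
  intro h'
  rw [isPosDyckAt_iff] at h
  rw [isNegDyckAt_iff, isPosDyckAt_iff] at h'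
  obtain ⟨hpos, hlen, -, hge, -⟩ := h
  have hup := hge 1 hpos
  have hdown := h'.2.2.2.1 (s + 1 - s') (by omega)
  rw [height_map_not, height_map_not, show s' + (s + 1 - s') = s + 1 by omega] at hdown
  have := height_succ_or (w := w) (i := s) (by omega)
  omega

theorem IsPosDyckAt.two_mul_count (h : IsPosDyckAt w s l) :
    2 * (factor w s l).count true = l := by
  obtain ⟨-, hlen, hcount, -⟩ := h
  have hsum := List.count_true_add_count_false (factor w s l)
  have hfactor : (factor w s l).length = l := by
    simp only [factor, List.length_take, List.length_drop]
    omega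
  omega

theorem mem_DF {sl : ℕ × ℕ} : sl ∈ DF w ↔ IsMaxDyckAt w sl.1 sl.2 := by
  simp only [DF, Finset.mem_filter, Finset.mem_product, Finset.mem_range, and_iff_right_iff_imp]
  rintro ⟨h | h, -⟩ <;> have := h.2.1 <;> omega

theorem IsConfig.isPosDyckAt_iff_extPath (hw : IsConfig n w) : IsPosDyckAt w s l ↔
    0 < l ∧ 0 ≤ extPath w s ∧ extPath w (s + l) = extPath w s ∧
      ∀ u : ℤ, s ≤ u → u ≤ s + l → extPath w s ≤ extPath w u := by
  have hlen := hw.1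
  rw [isPosDyckAt_iff]
  by_cases hsl : s + l ≤ w.length
  · rw [extPath_eq_height (t := s) (s := s) rfl (by omega),
      extPath_eq_height (t := s + l) (s := s + l) (by omega) hsl]
    refine and_congr_right fun _ => ⟨fun ⟨_, heq, hge, hs⟩ => ⟨hs, heq, fun u hsu hul => ?_⟩,
      fun ⟨hs, heq, hge⟩ => ⟨hsl, heq, fun i hi => ?_, hs⟩⟩
    · obtain ⟨i, rfl⟩ := Int.le.dest hsu
      rw [extPath_eq_height (t := s + i) (s := s + i) (by omega) (by omega)]
      exact hge i (by omega)
    · rw [← extPath_eq_height (t := s + i) (s := s + i) (by omega) (by omega)]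
      exact hge _ (by omega) (by omega)
  · refine iff_of_false (fun h => hsl h.2.1) fun ⟨_, hs, heq, _⟩ => hsl ?_
    have := (Finset.mem_Icc.1 (hw.isPath_extPath.mem_Icc_of_nonneg (heq ▸ hs))).2
    omega

theorem IsConfig.isPosDyckAt_of_isExcursion (hw : IsConfig n w) (hl : 0 < l)
    (hs : 0 ≤ extPath w s) (h : IsExcursion (extPath w) s (s + l)) : IsPosDyckAt w s l :=
  hw.isPosDyckAt_iff_extPath.2 ⟨hl, hs, h.eq, h.le_height⟩

theorem IsConfig.isMaxDyckAt_of_isExcursion (hw : IsConfig n w) (hl : 0 < l)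
    (hs : 0 ≤ extPath w s) (h : IsExcursion (extPath w) s (s + l)) : IsMaxDyckAt w s l := by
  have hdyck := hw.isPosDyckAt_of_isExcursion hl hs h
  refine ⟨Or.inl hdyck, fun s' l' hdyck' heq hs' hl' => ?_⟩
  have hpos := hdyck'.resolve_right (hdyck.not_isNegDyckAt heq hs' hl')
  have hlen := hdyck.2.1
  rw [← extPath_eq_height (t := s') rfl (by omega),
    ← extPath_eq_height (t := s) rfl (by omega)] at heq
  have hge := (hw.isPosDyckAt_iff_extPath.1 hpos).2.2.2
  rw [heq] at hge
  have hstart : s' = s := by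
    by_contra hne
    exact (hge (s - 1) (by omega) (by omega)).not_gt h.start_lt
  refine ⟨hstart, ?_⟩
  by_contra hne
  exact (hge (s + l + 1) (by omega) (by omega)).not_gt h.end_lt

theorem IsMaxDyckAt.isExcursion (h : IsMaxDyckAt w s l) (hw : IsConfig n w)
    (hpos : IsPosDyckAt w s l) : IsExcursion (extPath w) s (s + l) := by
  have hH := hw.isPath_extPath
  have hlen := hpos.2.1
  obtain ⟨hl, hs, heq, hge⟩ := hw.isPosDyckAt_iff_extPath.1 hpos
  obtain ⟨e, he⟩ := hH.exists_isRightEnd hs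
  have hle : s + l ≤ e := by
    by_contra! hlt
    exact (hge (e + 1) (by linarith [he.le]) hlt).not_gt he.end_lt
  obtain ⟨a, ha⟩ : ∃ a, IsExcursion (extPath w) a e :=
    ⟨_, hH.isExcursion_leftHalf (he.eq ▸ hs) (he.eq ▸ he.end_lt)⟩
  have has : extPath w a = extPath w s := ha.eq.symm.trans he.eq
  have hle' : a ≤ s := by
    by_contra! hlt
    exact (he.le_height (a - 1) (by omega) (by linarith [ha.le])).not_gt (has ▸ ha.start_lt)
  have ha0 := (Finset.mem_Icc.1 (hH.mem_Icc_of_nonneg (has ▸ hs))).1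
  lift a to ℕ using ha0
  obtain ⟨k, rfl⟩ := Int.le.dest ha.le
  have hdyck := hw.isPosDyckAt_of_isExcursion (by omega) (has ▸ hs) ha
  rw [extPath_eq_height (s := a) rfl (by omega), extPath_eq_height (s := s) rfl (by omega)] at has
  obtain ⟨rfl, rfl⟩ := h.2 a k (Or.inl hdyck) has (by omega) (by omega)
  exact ha

theorem IsConfig.sum_posDyck (hw : IsConfig n w) (α : ℝ) :
    ∑ sl ∈ (DF w).filter (fun sl => IsPosDyckAt w sl.1 sl.2),
      (1 + ((factor w sl.1 sl.2).count true : ℝ)) ^ α =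
        posVariant (dyckWeight α) (2 * n) (extPath w) := by
  have hH := hw.isPath_extPath
  have hexc : ∀ {sl : ℕ × ℕ}, sl ∈ (DF w).filter (fun sl => IsPosDyckAt w sl.1 sl.2) →
      0 ≤ extPath w sl.1 ∧ IsExcursion (extPath w) sl.1 (sl.1 + sl.2) := by
    intro sl h
    rw [Finset.mem_filter, mem_DF] at h
    exact ⟨(hw.isPosDyckAt_iff_extPath.1 h.2).2.1, h.1.isExcursion hw h.2⟩
  refine Finset.sum_of_injOn (fun sl => (sl.1 : ℤ)) ?_ ?_ ?_ ?_
  · rintro ⟨s, l⟩ h ⟨s', l'⟩ h' hss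
    obtain rfl : s = s' := Nat.cast_injective hss
    have hl := (hexc h).2.eq_add_rightHalf hH
    have hl' := (hexc h').2.eq_add_rightHalf hH
    simp only at hl hl'
    rw [Prod.mk.injEq]
    omega
  · exact fun sl h => Finset.mem_coe.2 (hH.mem_Icc_of_nonneg (hexc h).1)
  · intro t ht hnot
    rw [startWeight, ite_eq_right_iff, dyckWeight, ite_eq_left_iff]
    refine fun hstart hne => (hnot ?_).elim
    lift t to ℕ using (Finset.mem_Icc.1 ht).1
    have h := hH.isExcursion_rightHalf hstart.2 hstart.1
    refine ⟨(t, 2 * rightHalf (extPath w) t), Finset.mem_coe.2 (Finset.mem_filter.2 ?_), rfl⟩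
    have hl : 0 < 2 * rightHalf (extPath w) t := by omega
    exact ⟨mem_DF.2 (hw.isMaxDyckAt_of_isExcursion hl hstart.2 (by exact_mod_cast h)),
      hw.isPosDyckAt_of_isExcursion hl hstart.2 (by exact_mod_cast h)⟩
  · rintro ⟨s, l⟩ h
    obtain ⟨hs, he⟩ := hexc h
    have hdyck := (Finset.mem_filter.1 h).2
    have hpos : 0 < l := hdyck.1
    have hcount := hdyck.two_mul_count
    simp only at hs he hcount ⊢
    rw [← hcount, Nat.cast_mul, Nat.cast_two] at he
    rw [he.startWeight_eq hs, dyckWeight, if_neg (by omega)]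

theorem IsConfig.phi_eq (hw : IsConfig n w) (α : ℝ) : phi α w =
    posVariant (dyckWeight α) (2 * n) (extPath w) +
      posVariant (dyckWeight α) (2 * n) (extPath (w.map not)) := by
  rw [← hw.sum_posDyck α, ← hw.map_not.sum_posDyck α, phi,
    ← Finset.sum_filter_add_sum_filter_not _ fun sl : ℕ × ℕ => IsPosDyckAt w sl.1 sl.2]
  congr 1
  refine Finset.sum_congr ?_ ?_
  · ext sl
    simp only [Finset.mem_filter, mem_DF, isMaxDyckAt_map_not, ← isNegDyckAt_iff]
    refine and_congr_right fun h => ⟨h.1.resolve_left, fun hneg hpos => ?_⟩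
    exact hpos.not_isNegDyckAt rfl le_rfl le_rfl hneg
  · rintro sl h
    rw [Finset.mem_filter, ← isNegDyckAt_iff] at h
    rw [factor_map_not, count_map_not, Bool.not_true, h.2.2.2.1]

end DyckFactors

section Descent

variable {α : ℝ} {n : ℕ} {w : Word}

theorem IsConfig.sum_posVariant_flip_le (hw : IsConfig n w) (hn : 2 ≤ n) (h0 : 0 ≤ α)
    (h1 : α ≤ 1) :
    ∑ i ∈ allowedFlips w, (posVariant (dyckWeight α) (2 * n) (extPath (flip w i)) -
        posVariant (dyckWeight α) (2 * n) (extPath w)) ≤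
      -(drift α n * ((allowedFlips w).filter fun i => 0 ≤ height w (i + 2)).card) := by
  have hinj : Function.Injective fun i : ℕ => (i : ℤ) + 1 := fun i j h => by simpa using h
  have hf := isDriftWeight_dyckWeight (n := n) h0 h1
  have key := sum_posSites_variation_le hw.isPath_extPath hf
  rw [← sum_allowedSites_variation hw.isPath_extPath hf.zero, posSites,
    hw.allowedSites_eq_image hn, Finset.sum_image hinj.injOn, Finset.filter_image,
    Finset.card_image_of_injective _ hinj] at key
  convert key using 1
  · exact Finset.sum_congr rfl fun i hi => by rw [extPath_flip (canFlip_of_mem_allowedFlips hi)]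
  · congr 4
    refine Finset.filter_congr fun i hi => ?_
    have := (canFlip_of_mem_allowedFlips hi).1
    rw [extPath_eq_height (t := i + 1 + 1) (s := i + 2) (by omega) (by omega)]

theorem IsConfig.sum_phi_flip_sub_eq (hw : IsConfig n w) :
    ∑ i ∈ allowedFlips w, (phi α (flip w i) - phi α w) =
      ∑ i ∈ allowedFlips w, (posVariant (dyckWeight α) (2 * n) (extPath (flip w i)) -
        posVariant (dyckWeight α) (2 * n) (extPath w)) +
      ∑ i ∈ allowedFlips (w.map not),
        (posVariant (dyckWeight α) (2 * n) (extPath (flip (w.map not) i)) -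
          posVariant (dyckWeight α) (2 * n) (extPath (w.map not))) := by
  rw [allowedFlips_map_not, ← Finset.sum_add_distrib]
  refine Finset.sum_congr rfl fun i hi => ?_
  have hcan := canFlip_of_mem_allowedFlips hi
  rw [(hw.isConfig_flip hcan).phi_eq, hw.phi_eq, flip_map_not hcan]
  ring

theorem card_allowedFlips_le : (allowedFlips w).card ≤
    ((allowedFlips w).filter fun i => 0 ≤ height w (i + 2)).card +
      ((allowedFlips (w.map not)).filter fun i => 0 ≤ height (w.map not) (i + 2)).card := by
  rw [allowedFlips_map_not]
  refine (Finset.card_le_card fun i hi => ?_).trans (Finset.card_union_le _ _)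
  simp only [Finset.mem_union, Finset.mem_filter, height_map_not, Left.nonneg_neg_iff]
  exact (le_total 0 (height w (i + 2))).imp (⟨hi, ·⟩) (⟨hi, ·⟩)

theorem IsConfig.sum_phi_flip_sub_le (hw : IsConfig n w) (hn : 2 ≤ n) (h0 : 0 ≤ α) (h1 : α ≤ 1) :
    ∑ i ∈ allowedFlips w, (phi α (flip w i) - phi α w) ≤
      (allowedFlips w).card * -drift α n := by
  have hcard : ((allowedFlips w).card : ℝ) ≤ _ := Nat.cast_le.2 card_allowedFlips_le
  have hdrift := mul_le_mul_of_nonneg_left hcard (drift_nonneg (n := n) h0 h1)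
  rw [Nat.cast_add] at hdrift
  linarith [hw.sum_phi_flip_sub_eq (α := α), hw.sum_posVariant_flip_le hn h0 h1,
    hw.map_not.sum_posVariant_flip_le hn h0 h1]

end Descent

/-- for a configuration with at least one mismatch, the set of allowed
flips is nonempty, and the average variation of the variant `φ_α` over the allowed
flips is at most `-(α(1-α)/2) n^{α-2}`. -/
theorem variant_expected_decrease (α : ℝ) (hα : α ∈ Set.Ioo (0 : ℝ) 1)
    (n : ℕ) (hn : 2 ≤ n) (w : Word) (hw : IsConfig n w) (hE : 0 < mismatches w) :
    (allowedFlips w).Nonempty ∧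
    (1 / ((allowedFlips w).card : ℝ)) *
        ∑ i ∈ allowedFlips w, (phi α (flip w i) - phi α w)
      ≤ -(α * (1 - α) / 2) * (n : ℝ) ^ (α - 2) := by
  have hne := hw.allowedFlips_nonempty hn hE
  have hcard : (0 : ℝ) < (allowedFlips w).card := by exact_mod_cast hne.card_pos
  refine ⟨hne, ?_⟩
  rw [one_div, inv_mul_le_iff₀ hcard, neg_mul]
  exact hw.sum_phi_flip_sub_le hn hα.1.le hα.2.le

end Cooling
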